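/- Let F(z, w) = (z + (1/2)z²w, w + (1/2)zw²), g(ζ) = ζ·(1 + (1/2)ζ)², Ω_F = {p ∈ ℂ² \ {0} : F^n(p) → 0} and C̃ = {ζ ∈ ℂ \ {0} : g^n(ζ) → 0}. Then the map Φ(z, w) = (z, zw) is a biholomorphism from Ω_F onto ℂ* × C̃, i.e. Φ is injective and holomorphic on Ω_F with holomorphic inverse, and Φ(Ω_F) = ℂ* × C̃; hence Ω_F is biholomorphic to ℂ* × C̃. -/

import Mathlib

/-!
With `ζ = zw`, the map `F` multiplies `(z, w)` by the scalar `1 + ζ/2`, so `ζ` evolves by `g` and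
`F^n(z, w) = Pₙ·(z, w)`, `g^n(ζ) = ζ·Pₙ²` for one and the same sequence of scalars `Pₙ`
(`Fex_gex_iterate`). If `zw ≠ 0`, both orbits tend to `0` exactly when `Pₙ → 0`; if `zw = 0`, the
point is fixed by `F` and lies in the basin only if it is the origin. Hence `p ∈ Ω_F` if and only
if `zw ∈ C̃` (`mem_basinFex_iff`). In particular `z ≠ 0` on `Ω_F`, and `(z, ζ) ↦ (z, ζ/z)` is the
holomorphic inverse of `Φ`.
-/

open Filter Set

/-- The map `F(z, w) = (z + (1/2)z²w, w + (1/2)zw²) = (z, w)·(1 + (1/2)zw)`. -/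
noncomputable def Fex (p : ℂ × ℂ) : ℂ × ℂ :=
  (p.1 + (1 / 2) * p.1 ^ 2 * p.2, p.2 + (1 / 2) * p.1 * p.2 ^ 2)

/-- The one-variable polynomial `g(ζ) = ζ·(1 + (1/2)ζ)²`. -/
noncomputable def gex (ζ : ℂ) : ℂ := ζ * (1 + (1 / 2) * ζ) ^ 2

/-- The basin of attraction `Ω_F = {p ∈ ℂ² \ {0} : F^[n] p → 0}`. -/
noncomputable def basinFex : Set (ℂ × ℂ) :=
  {p | p ≠ 0 ∧ Tendsto (fun n => Fex^[n] p) atTop (nhds 0)}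

/-- The one-variable basin `C̃ = {ζ ∈ ℂ \ {0} : g^[n] ζ → 0}`. -/
noncomputable def Ctilde : Set ℂ :=
  {ζ | ζ ≠ 0 ∧ Tendsto (fun n => gex^[n] ζ) atTop (nhds 0)}

theorem Fex_gex_iterate (p : ℂ × ℂ) (n : ℕ) :
    ∃ P : ℂ, Fex^[n] p = (P * p.1, P * p.2) ∧ gex^[n] (p.1 * p.2) = p.1 * p.2 * P ^ 2 := by
  induction n with
  | zero => exact ⟨1, by simp, by simp⟩
  | succ n ih =>
    obtain ⟨P, hF, hg⟩ := ih
    refine ⟨P * (1 + (1 / 2) * (p.1 * p.2 * P ^ 2)), ?_, ?_⟩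
    · rw [Function.iterate_succ_apply', hF, Fex]
      ext <;> dsimp only <;> ring
    · rw [Function.iterate_succ_apply', hg, gex]
      ring

theorem Fex_eq_self {p : ℂ × ℂ} (h : p.1 * p.2 = 0) : Fex p = p := by
  rcases mul_eq_zero.mp h with h | h <;> ext <;> simp [Fex, h]

theorem mem_basinFex_iff (p : ℂ × ℂ) : p ∈ basinFex ↔ p.1 * p.2 ∈ Ctilde := by
  choose P hF hg using Fex_gex_iterate p
  constructor
  · rintro ⟨hp, hlim⟩
    refine ⟨fun h => hp ?_, ?_⟩
    -- A point with `zw = 0` is fixed, so its constant orbit converges to `p`.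
    · simp only [Function.iterate_fixed (Fex_eq_self h)] at hlim
      exact tendsto_nhds_unique tendsto_const_nhds hlim
    · have h : Tendsto (fun n => (Fex^[n] p).1 * (Fex^[n] p).2) atTop (nhds (0 * 0)) :=
        ((continuous_fst.tendsto (0 : ℂ × ℂ)).comp hlim).mul
          ((continuous_snd.tendsto (0 : ℂ × ℂ)).comp hlim)
      rw [mul_zero] at h
      refine h.congr fun n => ?_
      rw [hF, hg]
      ring
  · rintro ⟨hζ, hlim⟩
    refine ⟨fun h => hζ (by simp [h]), ?_⟩
    have hsq : Tendsto (fun n => P n ^ 2) atTop (nhds 0) := by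
      have h := hlim.const_mul (p.1 * p.2)⁻¹
      rw [mul_zero] at h
      refine h.congr fun n => ?_
      rw [hg, inv_mul_cancel_left₀ hζ]
    have hP : Tendsto P atTop (nhds 0) := by
      rw [tendsto_zero_iff_norm_tendsto_zero] at hsq ⊢
      have h := hsq.sqrt
      simpa [norm_pow, Real.sqrt_sq] using h
    have h := (hP.mul_const p.1).prodMk_nhds (hP.mul_const p.2)
    simp only [zero_mul] at h
    exact h.congr fun n => (hF n).symm

theorem fst_ne_zero_of_mem_basinFex {p : ℂ × ℂ} (hp : p ∈ basinFex) : p.1 ≠ 0 :=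
  left_ne_zero_of_mul ((mem_basinFex_iff p).mp hp).1

/-- The map `Φ(z, w) = (z, zw)` is a biholomorphism from `Ω_F` onto
`ℂ* × C̃`: it is injective and holomorphic on `Ω_F`, has holomorphic inverse, and
`Φ(Ω_F) = ℂ* × C̃`; hence `Ω_F` is biholomorphic to `ℂ* × C̃`. -/
theorem basinFex_biholo_Cstar_Ctilde :
    Set.InjOn (fun p : ℂ × ℂ => (p.1, p.1 * p.2)) basinFex ∧
    DifferentiableOn ℂ (fun p : ℂ × ℂ => (p.1, p.1 * p.2)) basinFex ∧
    (fun p : ℂ × ℂ => (p.1, p.1 * p.2)) '' basinFex =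
      {q : ℂ × ℂ | q.1 ≠ 0 ∧ q.2 ∈ Ctilde} ∧
    ∃ Φinv : ℂ × ℂ → ℂ × ℂ,
      DifferentiableOn ℂ Φinv {q : ℂ × ℂ | q.1 ≠ 0 ∧ q.2 ∈ Ctilde} ∧
      (∀ p ∈ basinFex, Φinv (p.1, p.1 * p.2) = p) ∧
      (∀ q ∈ {q : ℂ × ℂ | q.1 ≠ 0 ∧ q.2 ∈ Ctilde},
        ((Φinv q).1, (Φinv q).1 * (Φinv q).2) = q) := by
  have hinv : ∀ p ∈ basinFex, (p.1, p.1 * p.2 / p.1) = p := fun p hp =>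
    Prod.ext rfl (mul_div_cancel_left₀ p.2 (fst_ne_zero_of_mem_basinFex hp))
  refine ⟨?_, by fun_prop, ?_, fun q => (q.1, q.2 / q.1), ?_, hinv, ?_⟩
  · exact LeftInvOn.injOn (f₁' := fun q : ℂ × ℂ => (q.1, q.2 / q.1)) hinv
  · ext q
    constructor
    · rintro ⟨p, hp, rfl⟩
      exact ⟨fst_ne_zero_of_mem_basinFex (p := p) hp, (mem_basinFex_iff p).mp hp⟩
    · rintro ⟨h1, h2⟩
      have h : q.1 * (q.2 / q.1) = q.2 := mul_div_cancel₀ q.2 h1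
      exact ⟨(q.1, q.2 / q.1), (mem_basinFex_iff _).mpr (h.symm ▸ h2), Prod.ext rfl h⟩
  · intro q hq
    have hdiv : DifferentiableAt ℂ (fun q : ℂ × ℂ => q.2 / q.1) q := by
      simp only [div_eq_mul_inv]
      exact differentiableAt_snd.mul (differentiableAt_fst.inv hq.1)
    exact (differentiableAt_fst.prodMk hdiv).differentiableWithinAt
  · rintro q ⟨h1, -⟩
    exact Prod.ext rfl (mul_div_cancel₀ q.2 h1)
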